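/- Let T be a triangulation of an unpunctured disc with N marked points, and for distinct vertices i, j let (i,j) be the Conway–Coxeter frieze entry. Then (i,j) equals the number of matchings between T and the vertex set {i+1,...,j-1} (clockwise), and also equals the number of matchings between T and {j+1,...,i-1}; in particular (i,j) = (j,i). -/

import Mathlib

noncomputable section
open scoped Classical

namespace Frieze

/-- Vertices of the disc with `N` marked points, labelled clockwise. -/
abbrev Vx (N : ℕ) := ZMod N

/-- `Btw a x b` : `x` lies strictly between `a` and `b`, going clockwise. -/
def Btw {N : ℕ} (a x b : Vx N) : Prop :=
  0 < (x - a).val ∧ (x - a).val < (b - a).val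

/-- A valid diagonal (arc) of the unpunctured disc: endpoints distinct and non-adjacent. -/
def IsDiag (N : ℕ) (p : Vx N × Vx N) : Prop :=
  p.2 ≠ p.1 ∧ p.2 ≠ p.1 + 1 ∧ p.1 ≠ p.2 + 1

/-- Two chords cross iff their endpoints strictly interleave in the cyclic order. -/
def DCross {N : ℕ} (p q : Vx N × Vx N) : Prop :=
  (Btw p.1 q.1 p.2 ∧ Btw p.2 q.2 p.1) ∨ (Btw p.1 q.2 p.2 ∧ Btw p.2 q.1 p.1)

/-- A triangulation of the unpunctured disc with `N` marked points:
a maximal collection of pairwise noncrossing diagonals (each recorded once). -/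
structure Triang (N : ℕ) where
  diag : Finset (Vx N × Vx N)
  valid : ∀ p ∈ diag, IsDiag N p
  nodupSym : ∀ p ∈ diag, (p.2, p.1) ∉ diag
  noncross : ∀ p ∈ diag, ∀ q ∈ diag, ¬ DCross p q
  maximal : ∀ p, IsDiag N p → (∀ q ∈ diag, ¬ DCross p q) → p ∈ diag ∨ (p.2, p.1) ∈ diag

/-- The unordered diagonal `{a,b}` belongs to `T`. -/
def MemD {N : ℕ} (T : Triang N) (a b : Vx N) : Prop :=
  (a, b) ∈ T.diag ∨ (b, a) ∈ T.diag

/-- The segment from `a` to `a + d` (going `d` steps clockwise) can be a side of a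
triangle: it is a boundary edge (`d = 1`) or a diagonal of `T`. -/
def USide {N : ℕ} (T : Triang N) (a : Vx N) (d : ℕ) : Prop :=
  d = 1 ∨ MemD T a (a + (d : Vx N))

/-- `(a, p, q)` encodes the triangle with vertices `a`, `a+p`, `a+p+q` (clockwise);
the canonicity condition (`a` carries the smallest label) makes each triangle of
the triangulation be recorded exactly once. -/
def IsUTri {N : ℕ} (T : Triang N) (t : Vx N × ℕ × ℕ) : Prop :=
  1 ≤ t.2.1 ∧ 1 ≤ t.2.2 ∧ t.2.1 + t.2.2 ≤ N - 1 ∧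
  USide T t.1 t.2.1 ∧ USide T (t.1 + (t.2.1 : Vx N)) t.2.2 ∧
  USide T (t.1 + ((t.2.1 + t.2.2 : ℕ) : Vx N)) (N - t.2.1 - t.2.2) ∧
  t.1.val < (t.1 + (t.2.1 : Vx N)).val ∧ t.1.val < (t.1 + ((t.2.1 + t.2.2 : ℕ) : Vx N)).val

/-- Incidence of a vertex with a triangle. -/
def UInc {N : ℕ} (v : Vx N) (t : Vx N × ℕ × ℕ) : Prop :=
  v = t.1 ∨ v = t.1 + (t.2.1 : Vx N) ∨ v = t.1 + ((t.2.1 + t.2.2 : ℕ) : Vx N)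

/-- The number of matchings between the vertex set `I` and those triangles of `T`
lying in `S` : injective allocations, to each vertex of `I`, of an incident triangle. -/
def UMatchIn {N : ℕ} (T : Triang N) (I : Finset (Vx N)) (S : Set (Vx N × ℕ × ℕ)) : ℕ :=
  Set.ncard {f : I → Vx N × ℕ × ℕ | Function.Injective f ∧
    ∀ v : I, IsUTri T (f v) ∧ f v ∈ S ∧ UInc v.1 (f v)}

/-- The number of matchings between the vertex set `I` and the triangulation `T`. -/
def UMatch {N : ℕ} (T : Triang N) (I : Finset (Vx N)) : ℕ :=
  UMatchIn T I Set.univ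

/-- `n_{ij}` : the number of matchings between `T` and all marked points except `i, j`. -/
def nMatch {N : ℕ} [NeZero N] (T : Triang N) (i j : Vx N) : ℕ :=
  UMatch T (Finset.univ \ {i, j})

/-- `i` and `j` are joined by an edge of the triangulated polygon
(a boundary edge or a diagonal of `T`). -/
def Joined {N : ℕ} (T : Triang N) (i j : Vx N) : Prop :=
  j = i + 1 ∨ i = j + 1 ∨ MemD T i j

/-- `x` lies in the closed clockwise arc from `a` to `b`. -/
def InCWArc {N : ℕ} (a x b : Vx N) : Prop := x = a ∨ x = b ∨ Btw a x b

/-- `ℓ` is the Conway–Coxeter labelling of the vertices based at `i` : the vertex `i`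
is labelled `0`, every vertex joined to `i` by an edge (of `T`, or a boundary edge)
is labelled `1`, and in each triangle the vertex on the far side from `i` is labelled
by the sum of the labels of the other two vertices.  The label `ℓ j` is then the
Conway–Coxeter frieze entry `(i,j)`. -/
def IsCCLabel {N : ℕ} (T : Triang N) (i : Vx N) (ℓ : Vx N → ℕ) : Prop :=
  ℓ i = 0 ∧ (∀ j, Joined T i j → ℓ j = 1) ∧
  ∀ a p q, IsUTri T (a, p, q) →
    (InCWArc (a + ((p + q : ℕ) : Vx N)) i a →
      ℓ (a + (p : Vx N)) = ℓ a + ℓ (a + ((p + q : ℕ) : Vx N))) ∧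
    (InCWArc a i (a + (p : Vx N)) →
      ℓ (a + ((p + q : ℕ) : Vx N)) = ℓ a + ℓ (a + (p : Vx N))) ∧
    (InCWArc (a + (p : Vx N)) i (a + ((p + q : ℕ) : Vx N)) →
      ℓ a = ℓ (a + (p : Vx N)) + ℓ (a + ((p + q : ℕ) : Vx N)))

/-- number of matchings -/
def MM {V τ : Type} (inc : V → τ → Prop) (I : Finset V) (S : Set τ) : ℕ :=
  Nat.card {f : I → τ // Function.Injective f ∧ ∀ v : I, f v ∈ S ∧ inc v.1 (f v)}

theorem MM_empty {V τ : Type} (inc : V → τ → Prop) (S : Set τ) : MM inc ∅ S = 1 := by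
  unfold MM
  rw [Nat.card_eq_one_iff_unique]
  constructor
  · constructor
    rintro ⟨f, hf⟩ ⟨g, hg⟩
    apply Subtype.ext
    funext v
    exact absurd v.2 (Finset.notMem_empty _)
  · exact ⟨⟨fun v => absurd v.2 (Finset.notMem_empty _),
      fun v => absurd v.2 (Finset.notMem_empty _), fun v => absurd v.2 (Finset.notMem_empty _)⟩⟩

theorem MM_congr {V τ : Type} (inc : V → τ → Prop) (I : Finset V) (S S' : Set τ)
    (h : ∀ v ∈ I, ∀ t, inc v t → (t ∈ S ↔ t ∈ S')) : MM inc I S = MM inc I S' := by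
  unfold MM
  congr 1
  congr 1
  funext f
  apply propext
  refine and_congr Iff.rfl (forall_congr' fun v => ?_)
  constructor
  · rintro ⟨a, b⟩; exact ⟨(h v.1 v.2 _ b).1 a, b⟩
  · rintro ⟨a, b⟩; exact ⟨(h v.1 v.2 _ b).2 a, b⟩

def MMequiv {V τ : Type} [DecidableEq V] [DecidableEq τ] (inc : V → τ → Prop) (x : V) (I : Finset V) (hx : x ∉ I) (S : Set τ) :
    {f : ↥(insert x I : Finset V) → τ // Function.Injective f ∧ ∀ v, f v ∈ S ∧ inc v.1 (f v)} ≃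
    Σ t : {t : τ // t ∈ S ∧ inc x t},
      {f : I → τ // Function.Injective f ∧ ∀ v : I, f v ∈ S \ {t.1} ∧ inc v.1 (f v)} where
  toFun f := ⟨⟨f.1 ⟨x, Finset.mem_insert_self _ _⟩, f.2.2 ⟨x, Finset.mem_insert_self _ _⟩⟩,
    ⟨fun v => f.1 ⟨v.1, Finset.mem_insert_of_mem v.2⟩, by
      constructor
      · intro a b hab
        have := f.2.1 hab
        apply Subtype.ext
        simpa using this
      · intro v
        refine ⟨⟨(f.2.2 _).1, ?_⟩, (f.2.2 ⟨v.1, Finset.mem_insert_of_mem v.2⟩).2⟩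
        intro h
        have h2 := f.2.1 h
        have h3 : v.1 = x := by simpa using h2
        exact hx (h3 ▸ v.2)⟩⟩
  invFun p := ⟨fun v => if h : v.1 = x then p.1.1 else
      p.2.1 ⟨v.1, Finset.mem_of_mem_insert_of_ne v.2 h⟩, by
    obtain ⟨⟨t, ht⟩, ⟨g, hg, hg2⟩⟩ := p
    constructor
    · intro a b hab
      apply Subtype.ext
      dsimp only at hab
      split_ifs at hab with h1 h2 h2
      · rw [h1, h2]
      · exact absurd hab.symm (hg2 _).1.2
      · exact absurd hab (hg2 _).1.2
      · have := hg hab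
        simpa using this
    · intro v
      dsimp only
      split_ifs with h1
      · rw [h1]; exact ht
      · exact ⟨(hg2 _).1.1, (hg2 ⟨v.1, Finset.mem_of_mem_insert_of_ne v.2 h1⟩).2⟩⟩
  left_inv f := by
    apply Subtype.ext
    funext v
    dsimp only
    split_ifs with h1
    · have e : (⟨x, Finset.mem_insert_self _ _⟩ : ↥(insert x I : Finset V)) = v := Subtype.ext h1.symm
      exact congrArg f.1 e
    · rfl
  right_inv p := by
    obtain ⟨⟨t, ht⟩, ⟨g, hg, hg2⟩⟩ := p
    have key : ∀ (p q : Σ t : {t : τ // t ∈ S ∧ inc x t},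
      {f : I → τ // Function.Injective f ∧ ∀ v : I, f v ∈ S \ {t.1} ∧ inc v.1 (f v)}),
      p.1.1 = q.1.1 → p.2.1 = q.2.1 → p = q := by
      rintro ⟨⟨t, ht⟩, ⟨g, hg⟩⟩ ⟨⟨t', ht'⟩, ⟨g', hg'⟩⟩ h1 h2
      dsimp only at h1 h2
      subst h1 h2
      rfl
    apply key
    · simp
    · funext v
      have : v.1 ≠ x := fun h => hx (h ▸ v.2)
      simp [this]

theorem MM_insert {V τ : Type} [DecidableEq V] [DecidableEq τ] (inc : V → τ → Prop) (x : V) (I : Finset V) (hx : x ∉ I)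
    (S : Finset τ) : MM inc (insert x I) (S : Set τ) =
      ∑ t ∈ S.filter (inc x), MM inc I ((S \ {t} : Finset τ) : Set τ) := by
  unfold MM
  rw [Nat.card_congr (MMequiv inc x I hx (S : Set τ))]
  have hfin : ∀ t : τ, Finite {f : I → τ // Function.Injective f ∧ ∀ v : I, f v ∈ (S : Set τ) \ {t} ∧ inc v.1 (f v)} := by
    intro t
    apply Finite.of_injective (β := I → S) (fun f v => ⟨f.1 v, (f.2.2 v).1.1⟩)
    intro f g h
    apply Subtype.ext
    funext v
    have := congrFun h v
    simpa using this
  have hI : Finite {t : τ // t ∈ (S : Set τ) ∧ inc x t} :=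
    Finite.of_injective (β := S) (fun t => ⟨t.1, t.2.1⟩) (by
      intro a b h; apply Subtype.ext; simpa using h)
  have := Fintype.ofFinite {t : τ // t ∈ (S : Set τ) ∧ inc x t}
  rw [Nat.card_sigma]
  symm
  refine (Finset.sum_subtype (F := this) (p := fun t => t ∈ (S : Set τ) ∧ inc x t) _ ?_ _).trans ?_
  · intro t; simp
  · simp

theorem MM_mul {V τ : Type} [DecidableEq V] [DecidableEq τ] (inc : V → τ → Prop) (I : Finset V) (S : Finset τ) (J : Finset V) :
    ∀ (D : Finset τ), Disjoint I J → Disjoint S D → J.card = D.card →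
    (∀ v ∈ J, ∀ t ∈ S, ¬ inc v t) →
    MM inc (J ∪ I) ((D ∪ S : Finset τ) : Set τ) = MM inc J (D : Set τ) * MM inc I (S : Set τ) := by
  induction J using Finset.induction_on with
  | empty =>
    intro D _ _ h _
    have : D = ∅ := by
      rw [← Finset.card_eq_zero, ← h, Finset.card_empty]
    subst this
    simp [MM_empty]
  | insert x J hx ih =>
    intro D hIJ hSD hc hin
    rw [Finset.disjoint_insert_right] at hIJ
    rw [Finset.insert_union, MM_insert _ _ _ (by simp [hx, hIJ.1]), MM_insert _ _ _ hx,
      Finset.sum_mul]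
    have : (D ∪ S).filter (inc x) = D.filter (inc x) := by
      ext t
      have := hin x (Finset.mem_insert_self _ _) t
      simp only [Finset.mem_filter, Finset.mem_union]
      tauto
    rw [this]
    apply Finset.sum_congr rfl
    intro t ht
    rw [Finset.mem_filter] at ht
    have htS : t ∉ S := fun h => Finset.disjoint_left.1 hSD h ht.1
    have e : (D ∪ S) \ {t} = (D \ {t}) ∪ S := by
      ext s
      simp only [Finset.mem_sdiff, Finset.mem_union, Finset.mem_singleton]
      constructor
      · tauto
      · rintro (h | h)
        · tauto
        · exact ⟨Or.inr h, fun h2 => htS (h2 ▸ h)⟩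
    rw [e]
    apply ih _ hIJ.2 (hSD.mono_right Finset.sdiff_subset)
    · rw [Finset.card_sdiff_of_subset (by simpa using ht.1), ← hc, Finset.card_insert_of_notMem hx]
      simp
    · intro v hv; exact hin v (Finset.mem_insert_of_mem hv)

theorem MM_add {V τ : Type} [DecidableEq V] [DecidableEq τ] (inc : V → τ → Prop) (I : Finset V) (S : Finset τ) (x : V) (t : τ)
    (hx : x ∉ I) (ht : t ∉ S) (hxt : inc x t) (h : ∀ v ∈ I, ¬ inc v t) :
    MM inc (insert x I) ((insert t S : Finset τ) : Set τ) =
      MM inc I (S : Set τ) + MM inc (insert x I) (S : Set τ) := by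
  rw [MM_insert _ _ _ hx, MM_insert _ _ _ hx, Finset.filter_insert, if_pos hxt,
    Finset.sum_insert (by simp [ht])]
  congr 1
  · apply MM_congr
    intro v hv s hs
    have : s ≠ t := fun e => h v hv (e ▸ hs)
    simp [this]
  · apply Finset.sum_congr rfl
    intro s hs
    apply MM_congr
    intro v hv r hr
    have : r ≠ t := fun e => h v hv (e ▸ hr)
    simp [this]

theorem MM_single {V τ : Type} [DecidableEq V] [DecidableEq τ] (inc : V → τ → Prop) (x : V) (t : τ) (hxt : inc x t) :
    MM inc {x} (({t} : Finset τ) : Set τ) = 1 := by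
  have := MM_insert inc x ∅ (by simp) {t}
  rw [Finset.filter_singleton, if_pos hxt, Finset.sum_singleton, MM_empty] at this
  simpa using this

/-! linear model -/

structure Lin (n : ℕ) (E : ℕ → ℕ → Prop) : Prop where
  step : ∀ x, x < n → E x (x+1)
  root : E 0 n
  nc : ∀ x z y w, x < z → z < y → y < w → w ≤ n → E x y → E z w → False
  max : ∀ x y, x < y → y ≤ n → (∀ u w, u < w → w ≤ n → E u w →
    ¬ (x < u ∧ u < y ∧ y < w) ∧ ¬ (u < x ∧ x < w ∧ w < y)) → E x y

theorem Lin.apex {n : ℕ} {E : ℕ → ℕ → Prop} (H : Lin n E) (x y : ℕ) (hxy : x + 1 < y) (hy : y ≤ n)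
    (hE : E x y) : ∃ c, x < c ∧ c < y ∧ E x c ∧ E c y := by
  obtain ⟨c, hc, hmax⟩ := Finset.exists_max_image ((Finset.Ioo x y).filter (E x)) id
    ⟨x+1, by simp; exact ⟨hxy, H.step _ (by omega)⟩⟩
  simp only [Finset.mem_filter, Finset.mem_Ioo, id] at hc hmax
  refine ⟨c, hc.1.1, hc.1.2, hc.2, ?_⟩
  apply H.max c y hc.1.2 hy
  intro u w huw hw huE
  constructor
  · rintro ⟨h1, h2, h3⟩
    exact H.nc x u y w (by omega) h2 h3 hw hE huE
  · rintro ⟨h1, h2, h3⟩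
    rcases lt_trichotomy u x with h | h | h
    · exact H.nc u x w y h (by omega) h3 hy huE hE
    · subst h
      have := hmax w ⟨⟨by omega, h3⟩, huE⟩
      omega
    · exact H.nc x u c w h h1 h2 hw hc.2 huE

def linc (v : ℕ) (t : ℕ × ℕ × ℕ) : Prop := v = t.1 ∨ v = t.2.1 ∨ v = t.2.2

def IsLT (n : ℕ) (E : ℕ → ℕ → Prop) (t : ℕ × ℕ × ℕ) : Prop :=
  t.1 < t.2.1 ∧ t.2.1 < t.2.2 ∧ t.2.2 ≤ n ∧ E t.1 t.2.1 ∧ E t.2.1 t.2.2 ∧ E t.1 t.2.2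

def LTri (n : ℕ) (E : ℕ → ℕ → Prop) : Finset (ℕ × ℕ × ℕ) :=
  (Finset.range (n+1) ×ˢ (Finset.range (n+1) ×ˢ Finset.range (n+1))).filter (IsLT n E)

theorem mem_LTri {n : ℕ} {E : ℕ → ℕ → Prop} (t : ℕ × ℕ × ℕ) : t ∈ LTri n E ↔ IsLT n E t := by
  unfold LTri
  simp only [Finset.mem_filter, Finset.mem_product, Finset.mem_range]
  constructor
  · exact fun h => h.2
  · intro h
    refine ⟨?_, h⟩
    obtain ⟨h1, h2, h3, -⟩ := h
    omega

def LD (n : ℕ) (E : ℕ → ℕ → Prop) (x y : ℕ) : Finset (ℕ × ℕ × ℕ) :=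
  (LTri n E).filter (fun t => x ≤ t.1 ∧ t.2.2 ≤ y)

def LO (n : ℕ) (E : ℕ → ℕ → Prop) (x y : ℕ) : Finset (ℕ × ℕ × ℕ) :=
  (LTri n E).filter (fun t => ¬ (x ≤ t.1 ∧ t.2.2 ≤ y))

theorem Lin.split {n : ℕ} {E : ℕ → ℕ → Prop} (H : Lin n E) {x c y : ℕ} (hxc : x < c) (hcy : c < y)
    (hy : y ≤ n) (h1 : E x c) (h2 : E c y) (t : ℕ × ℕ × ℕ)
    (ht : IsLT n E t) (hx : x ≤ t.1) (hy' : t.2.2 ≤ y) :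
    t.2.2 ≤ c ∨ c ≤ t.1 ∨ t = (x, c, y) := by
  obtain ⟨a, b, d⟩ := t
  obtain ⟨k1, k2, k3, k4, k5, k6⟩ := ht
  dsimp only at *
  by_cases g1 : d ≤ c
  · exact Or.inl g1
  by_cases g2 : c ≤ a
  · exact Or.inr (Or.inl g2)
  right; right
  have ha : a = x := by
    by_contra hne
    exact H.nc x a c d (by omega) (by omega) (by omega) k3 h1 k6
  have hd : d = y := by
    by_contra hne
    exact H.nc a c d y (by omega) (by omega) (by omega) hy k6 h2
  subst ha hd
  have hb : b = c := by
    rcases lt_trichotomy b c with h | h | h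
    · exact (H.nc a b c d (by omega) (by omega) (by omega) hy h1 k5).elim
    · exact h
    · exact (H.nc a c b d (by omega) (by omega) (by omega) hy k4 h2).elim
  rw [hb]

theorem Lin.inside {n : ℕ} {E : ℕ → ℕ → Prop} (H : Lin n E) {x y : ℕ} (hxy : x < y)
    (hy : y ≤ n) (h1 : E x y) (t : ℕ × ℕ × ℕ)
    (ht : IsLT n E t) (v : ℕ) (hv : linc v t) (hx : x < v) (hvy : v < y) :
    x ≤ t.1 ∧ t.2.2 ≤ y := by
  obtain ⟨a, b, d⟩ := t
  obtain ⟨k1, k2, k3, k4, k5, k6⟩ := ht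
  unfold linc at hv
  dsimp only at *
  have up : ∀ w, v < w → w ≤ n → E v w → w ≤ y := by
    intro w hw hwn hE
    by_contra hc
    exact H.nc x v y w hx hvy (by omega) hwn h1 hE
  have dn : ∀ w, w < v → E w v → x ≤ w := by
    intro w hw hE
    by_contra hc
    exact H.nc w x v y (by omega) hx hvy hy hE h1
  rcases hv with rfl | rfl | rfl
  · exact ⟨by omega, up d (by omega) k3 k6⟩
  · exact ⟨dn a (by omega) k4, up d (by omega) k3 k5⟩
  · exact ⟨dn a (by omega) k6, by omega⟩

theorem Lin.perfect {n : ℕ} {E : ℕ → ℕ → Prop} (H : Lin n E) : ∀ (k x y : ℕ), y - x = k → x < y →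
    y ≤ n → E x y → (LD n E x y).card = y - x - 1 ∧
      MM linc (Finset.Ioo x y) (LD n E x y : Set (ℕ × ℕ × ℕ)) = 1 := by
  intro k
  induction k using Nat.strong_induction_on with
  | _ k ih =>
    intro x y hk hxy hy hE
    by_cases h1 : y = x + 1
    · have e1 : LD n E x y = ∅ := by
        ext t
        simp only [LD, Finset.mem_filter, mem_LTri, Finset.notMem_empty, iff_false]
        rintro ⟨⟨g1, g2, -⟩, g3, g4⟩
        omega
      have e2 : Finset.Ioo x y = ∅ := by
        ext t; simp; omega
      rw [e1, e2, MM_empty]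
      simp; omega
    · obtain ⟨c, hxc, hcy, hE1, hE2⟩ := H.apex x y (by omega) hy hE
      obtain ⟨a1, b1⟩ := ih (c - x) (by omega) x c rfl hxc (by omega) hE1
      obtain ⟨a2, b2⟩ := ih (y - c) (by omega) c y rfl hcy hy hE2
      have e1 : LD n E x y = LD n E x c ∪ (LD n E c y ∪ {(x, c, y)}) := by
        ext t
        simp only [LD, Finset.mem_filter, mem_LTri, Finset.mem_union, Finset.mem_singleton]
        constructor
        · rintro ⟨g, g1, g2⟩
          rcases H.split hxc hcy hy hE1 hE2 t g g1 g2 with h | h | h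
          · exact Or.inl ⟨g, g1, h⟩
          · exact Or.inr (Or.inl ⟨g, h, g2⟩)
          · exact Or.inr (Or.inr h)
        · rintro (⟨g, g1, g2⟩ | ⟨g, g1, g2⟩ | rfl)
          · exact ⟨g, g1, by omega⟩
          · exact ⟨g, by omega, g2⟩
          · exact ⟨⟨hxc, hcy, hy, hE1, hE2, hE⟩, le_rfl, le_rfl⟩
      have d2 : Disjoint (LD n E c y) {(x, c, y)} := by
        rw [Finset.disjoint_singleton_right]
        simp [LD]; intros; omega
      have d1 : Disjoint (LD n E x c) (LD n E c y ∪ {(x, c, y)}) := by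
        rw [Finset.disjoint_left]
        intro t
        simp only [LD, Finset.mem_filter, mem_LTri, Finset.mem_union, Finset.mem_singleton]
        rintro ⟨⟨g1, g2, -⟩, g3, g4⟩ (⟨g5, g6, g7⟩ | rfl)
        · omega
        · dsimp only at *; omega
      have e2 : Finset.Ioo x y = Finset.Ioo x c ∪ (Finset.Ioo c y ∪ {c}) := by
        ext t; simp; omega
      constructor
      · rw [e1, Finset.card_union_of_disjoint d1, Finset.card_union_of_disjoint d2, a1, a2]
        simp; omega
      · rw [e1, e2, MM_mul, MM_mul, b1, b2, MM_single]
        · simp [linc]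
        · simp
        · exact d2.symm
        · simp [a2]
        · intro v hv t ht
          simp only [Finset.mem_Ioo, Finset.mem_singleton] at hv ht
          subst ht
          simp only [linc]
          omega
        · rw [Finset.disjoint_left]; intro t; simp; omega
        · exact d1.symm
        · simp [a1]
        · intro v hv t ht
          simp only [LD, Finset.mem_Ioo, Finset.mem_filter, mem_LTri, Finset.mem_union, Finset.mem_singleton] at hv ht
          rcases ht with ⟨⟨g1, g2, -⟩, g3, g4⟩ | rfl
          · simp only [linc]; omega
          · simp only [linc]; omega

theorem Lin.main {n : ℕ} {E : ℕ → ℕ → Prop} (H : Lin n E) (l : ℕ → ℕ)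
    (hl : ∀ x c y, IsLT n E (x, c, y) → l c = l x + l y) :
    ∀ (k x y : ℕ), y - x = k → x < y → y ≤ n → E x y →
      MM linc (Finset.Ioc y n) (LO n E x y : Set (ℕ × ℕ × ℕ)) = l y →
      MM linc (Finset.Icc y n) (LO n E x y : Set (ℕ × ℕ × ℕ)) = l x →
      ∀ j, x < j → j ≤ y → MM linc (Finset.Ioc j n) (LTri n E : Set (ℕ × ℕ × ℕ)) = l j := by
  intro k
  induction k using Nat.strong_induction_on with
  | _ k ih =>
    intro x y hk hxy hy hE hA hB j hxj hjy
    by_cases h1 : y = x + 1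
    · have : j = y := by omega
      subst this
      rw [← hA]
      congr 2
      ext t
      simp only [LO, Finset.mem_filter, mem_LTri]
      constructor
      · intro h; refine ⟨h, ?_⟩; obtain ⟨g1, g2, -⟩ := h; omega
      · exact fun h => h.1
    · obtain ⟨c, hxc, hcy, hE1, hE2⟩ := H.apex x y (by omega) hy hE
      have ht : IsLT n E (x, c, y) := ⟨hxc, hcy, hy, hE1, hE2, hE⟩
      have hlc := hl x c y ht
      have htO : (x, c, y) ∉ LO n E x y := by simp [LO]
      have eI : Finset.Icc y n = insert y (Finset.Ioc y n) := by
        ext t; simp; omega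
      have hAB : MM linc (Finset.Icc y n)
          ((insert (x, c, y) (LO n E x y) : Finset _) : Set (ℕ × ℕ × ℕ)) = l c := by
        rw [eI, MM_add, hA, ← eI, hB, hlc, add_comm]
        · simp
        · exact htO
        · simp [linc]
        · intro v hv; simp only [Finset.mem_Ioc] at hv; simp only [linc]; omega
      by_cases hjc : j ≤ c
      · obtain ⟨a2, b2⟩ := H.perfect (y - c) c y rfl hcy hy hE2
        have e1 : LO n E x c = LD n E c y ∪ insert (x, c, y) (LO n E x y) := by
          ext t
          simp only [LO, LD, Finset.mem_filter, mem_LTri, Finset.mem_union, Finset.mem_insert]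
          constructor
          · rintro ⟨g, g1⟩
            by_cases g2 : x ≤ t.1 ∧ t.2.2 ≤ y
            · rcases H.split hxc hcy hy hE1 hE2 t g g2.1 g2.2 with h | h | h
              · exact absurd ⟨g2.1, h⟩ g1
              · exact Or.inl ⟨g, h, g2.2⟩
              · exact Or.inr (Or.inl h)
            · exact Or.inr (Or.inr ⟨g, g2⟩)
          · rintro (⟨g, g1⟩ | rfl | ⟨g, g1⟩)
            · refine ⟨g, ?_⟩; obtain ⟨g3, g4, -⟩ := g; omega
            · exact ⟨ht, by dsimp only; omega⟩
            · exact ⟨g, by omega⟩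
        have d1 : Disjoint (insert (x, c, y) (LO n E x y)) (LD n E c y) := by
          rw [Finset.disjoint_left]
          intro t
          simp only [LO, LD, Finset.mem_filter, mem_LTri, Finset.mem_insert]
          rintro (rfl | ⟨g, g1⟩) ⟨g2, g3⟩
          · dsimp only at *; omega
          · omega
        have nin : ∀ v, x < v → v < y → ∀ t ∈ LO n E x y, ¬ linc v t := by
          intro v hv1 hv2 t ht' hi
          simp only [LO, Finset.mem_filter, mem_LTri] at ht'
          exact ht'.2 (H.inside hxy hy hE t ht'.1 v hi hv1 hv2)
        refine ih (c - x) (by omega) x c rfl hxc (by omega) hE1 ?_ ?_ j hxj hjc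
        · have e2 : Finset.Ioc c n = Finset.Ioo c y ∪ Finset.Icc y n := by
            ext t; simp; omega
          rw [e1, e2, MM_mul, b2, hAB, one_mul]
          · rw [Finset.disjoint_left]; intro t; simp; omega
          · exact d1
          · simp [a2]
          · intro v hv t ht'
            simp only [Finset.mem_Ioo, Finset.mem_insert] at hv ht'
            rcases ht' with rfl | ht'
            · simp only [linc]; omega
            · exact nin v (by omega) hv.2 t ht'
        · have e2 : Finset.Icc c n = Finset.Ioo c y ∪ ({c} ∪ Finset.Icc y n) := by
            ext t; simp; omega
          have e3 : insert (x, c, y) (LO n E x y) = {(x, c, y)} ∪ LO n E x y := by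
            ext t; simp
          rw [e1, e2, MM_mul, b2, one_mul, e3, MM_mul, hB, MM_single, one_mul]
          · simp [linc]
          · simp; omega
          · simpa using htO
          · simp
          · intro v hv t ht'
            simp only [Finset.mem_singleton] at hv
            subst hv
            exact nin v hxc hcy t ht'
          · rw [Finset.disjoint_left]; intro t; simp; omega
          · exact d1
          · simp [a2]
          · intro v hv t ht'
            simp only [Finset.mem_Ioo, Finset.mem_insert] at hv ht'
            rcases ht' with rfl | ht'
            · simp only [linc]; omega
            · exact nin v (by omega) hv.2 t ht'
      · have e0 : ∀ v, y ≤ v → ∀ t, linc v t →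
            (t ∈ LO n E c y ↔ t ∈ insert (x, c, y) (LO n E x y)) := by
          intro v hv t hi
          simp only [LO, Finset.mem_filter, mem_LTri, Finset.mem_insert]
          constructor
          · rintro ⟨g, g1⟩
            by_cases g2 : x ≤ t.1 ∧ t.2.2 ≤ y
            · rcases H.split hxc hcy hy hE1 hE2 t g g2.1 g2.2 with h | h | h
              · exfalso
                obtain ⟨k1, k2, -⟩ := g
                simp only [linc] at hi
                omega
              · omega
              · exact Or.inl h
            · exact Or.inr ⟨g, g2⟩
          · rintro (rfl | ⟨g, g1⟩)
            · exact ⟨ht, by dsimp only; omega⟩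
            · exact ⟨g, by omega⟩
        refine ih (y - c) (by omega) c y rfl hcy hy hE2 ?_ ?_ j (by omega) hjy
        · rw [← hA]
          apply MM_congr
          intro v hv t hi
          simp only [Finset.mem_Ioc] at hv
          have := e0 v (by omega) t hi
          have h3 : t ≠ (x, c, y) := by
            rintro rfl
            simp only [linc] at hi; omega
          simpa [h3] using this
        · rw [← hAB]
          apply MM_congr
          intro v hv t hi
          simp only [Finset.mem_Icc] at hv
          simpa using e0 v (by omega) t hi

theorem Lin.final {n : ℕ} {E : ℕ → ℕ → Prop} (H : Lin n E) (hn : 0 < n) (l : ℕ → ℕ)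
    (hl : ∀ x c y, IsLT n E (x, c, y) → l c = l x + l y) (h0 : l 0 = 0) (h1 : l n = 1)
    (j : ℕ) (hj : 0 < j) (hjn : j ≤ n) :
    MM linc (Finset.Ioc j n) (LTri n E : Set (ℕ × ℕ × ℕ)) = l j := by
  have e : LO n E 0 n = ∅ := by
    ext t
    simp only [LO, Finset.mem_filter, mem_LTri, Finset.notMem_empty, iff_false]
    rintro ⟨⟨g1, g2, g3, -⟩, g4⟩
    omega
  refine H.main l hl _ 0 n rfl hn le_rfl H.root ?_ ?_ j hj hjn
  · simp [MM_empty, h1]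
  · have := MM_insert linc n ∅ (by simp) ∅
    rw [e, h0]
    simpa using this

theorem MM_transport {V W σ τ : Type} (inc : V → τ → Prop) (inc' : W → σ → Prop)
    (I : Finset V) (I' : Finset W) (S : Set τ) (S' : Set σ) (φ : W → V) (g : σ → τ)
    (hφ : Set.BijOn φ (I' : Set W) (I : Set V)) (hg : Set.BijOn g S' S)
    (h : ∀ w ∈ I', ∀ s ∈ S', inc' w s ↔ inc (φ w) (g s)) : MM inc' I' S' = MM inc I S := by
  unfold MM
  let e : I' ≃ I := Set.BijOn.equiv φ hφ
  let k : S' ≃ S := Set.BijOn.equiv g hg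
  have he : ∀ w : I', (e w).1 = φ w.1 := fun w => rfl
  have hk : ∀ s : S', (k s).1 = g s.1 := fun s => rfl
  have he' : ∀ v : I, φ (e.symm v).1 = v.1 := fun v => by rw [← he, e.apply_symm_apply]
  have hk' : ∀ t : S, g (k.symm t).1 = t.1 := fun v => by rw [← hk, k.apply_symm_apply]
  refine Nat.card_congr ⟨fun f => ⟨fun v => (k ⟨f.1 (e.symm v), (f.2.2 _).1⟩).1, ?_, ?_⟩,
    fun f => ⟨fun w => (k.symm ⟨f.1 (e w), (f.2.2 _).1⟩).1, ?_, ?_⟩, ?_, ?_⟩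
  · intro a b hab
    have := k.injective (Subtype.ext hab)
    exact e.symm.injective (f.2.1 (by simpa using this))
  · intro v
    refine ⟨Subtype.coe_prop _, ?_⟩
    have h1 := (h (e.symm v).1 (e.symm v).2 _ (f.2.2 (e.symm v)).1).1 (f.2.2 (e.symm v)).2
    rw [he'] at h1
    exact h1
  · intro a b hab
    have := k.symm.injective (Subtype.ext hab)
    exact e.injective (f.2.1 (by simpa using this))
  · intro w
    refine ⟨Subtype.coe_prop _, ?_⟩
    rw [h w.1 w.2 _ (Subtype.coe_prop _), hk']
    exact (f.2.2 (e w)).2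
  · intro f
    apply Subtype.ext
    funext w
    simp
  · intro f
    apply Subtype.ext
    funext w
    simp

theorem UMatch_eq {N : ℕ} (T : Triang N) (I : Finset (Vx N)) :
    UMatch T I = MM UInc I {t | IsUTri T t} := by
  unfold UMatch UMatchIn MM Set.ncard Set.encard
  simp only [Set.mem_univ, true_and, Set.mem_ofPred_eq]
  rfl

theorem Joined.symm {N : ℕ} {T : Triang N} {a b : Vx N} (h : Joined T a b) : Joined T b a := by
  unfold Joined MemD at *
  tauto

theorem cast_inj {N : ℕ} {a b : ℕ} (ha : a < N) (hb : b < N) (h : (a : ZMod N) = b) : a = b := by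
  rw [ZMod.natCast_eq_natCast_iff', Nat.mod_eq_of_lt ha, Nat.mod_eq_of_lt hb] at h
  exact h

theorem side_of_joined {N : ℕ} (T : Triang N) (a b : Vx N) (d : ℕ) (h : Joined T a b)
    (hb : b = a + (d : Vx N)) (hd : d + 2 ≤ N) : USide T a d := by
  subst hb
  rcases h with h | h | h
  · left
    apply cast_inj (N := N) (by omega) (by omega)
    push_cast
    linear_combination h
  · exfalso
    have : d + 1 = 0 := by
      apply cast_inj (N := N) (by omega) (by omega)
      push_cast
      linear_combination -h
    omega
  · right; exact h

theorem joined_of_side {N : ℕ} {T : Triang N} {a : Vx N} {d : ℕ} (h : USide T a d) :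
    Joined T a (a + (d : Vx N)) := by
  rcases h with rfl | h
  · left; simp
  · right; right; exact h

theorem tri_core {N : ℕ} [NeZero N] (T : Triang N) (u v w : Vx N) (hb : Btw u v w)
    (h1 : Joined T u v) (h2 : Joined T v w) (h3 : Joined T w u) (m1 : u.val < v.val)
    (m2 : u.val < w.val) : ∃ p q : ℕ, IsUTri T (u, p, q) ∧ u + (p : Vx N) = v ∧
      u + ((p + q : ℕ) : Vx N) = w := by
  obtain ⟨b1, b2⟩ := hb
  have b3 := ZMod.val_lt (w - u)
  have e1 : u + (((v - u).val : ℕ) : Vx N) = v := by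
    rw [ZMod.natCast_zmod_val]; ring
  have e2 : u + (((w - u).val : ℕ) : Vx N) = w := by
    rw [ZMod.natCast_zmod_val]; ring
  obtain ⟨q, hq⟩ := Nat.exists_eq_add_of_lt b2
  have hq' : (w - u).val = (v - u).val + (q + 1) := by omega
  rw [hq'] at e2
  refine ⟨(v - u).val, q + 1, ⟨b1, by simp, by dsimp only; omega, ?_, ?_, ?_, ?_, ?_⟩, e1, e2⟩
  · exact side_of_joined T u v _ h1 e1.symm (by dsimp only; omega)
  · dsimp only
    rw [e1]
    refine side_of_joined T v w _ h2 ?_ (by omega)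
    rw [← e2]
    nth_rw 2 [← e1]
    push_cast; ring
  · dsimp only
    rw [e2]
    refine side_of_joined T w u _ h3 ?_ (by omega)
    rw [show N - (v-u).val - (q+1) = N - ((v-u).val + (q+1)) by omega, Nat.cast_sub (by omega)]
    nth_rw 1 [← e2]
    rw [add_assoc, add_sub_cancel, ZMod.natCast_self, add_zero]
  · dsimp only; rw [e1]; exact m1
  · dsimp only; rw [e2]; exact m2

theorem val_sub_cast {N : ℕ} (a b : ℕ) (ha : a < N) (hb : b < N) :
    ((b : ZMod N) - a).val = if a ≤ b then b - a else N + b - a := by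
  split_ifs with h
  · rw [← Nat.cast_sub h, ZMod.val_natCast_of_lt (by omega)]
  · have : ((b : ZMod N) - a) = ((N + b - a : ℕ) : ZMod N) := by
      rw [Nat.cast_sub (by omega)]; simp
    rw [this, ZMod.val_natCast_of_lt (by omega)]

def cyc (a b c : ℕ) : Prop := (a < b ∧ b < c) ∨ (b < c ∧ c < a) ∨ (c < a ∧ a < b)

theorem btw_cast {N : ℕ} (i : ZMod N) (a b c : ℕ) (ha : a < N) (hb : b < N) (hc : c < N) :
    Btw (i + (a : ZMod N)) (i + (b : ZMod N)) (i + (c : ZMod N)) ↔ cyc a b c := by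
  unfold Btw cyc
  rw [add_sub_add_left_eq_sub, add_sub_add_left_eq_sub, val_sub_cast a b ha hb,
    val_sub_cast a c ha hc]
  split_ifs <;> omega

theorem btw_cast_neg {N : ℕ} (i : ZMod N) (a b c : ℕ) (ha : a < N) (hb : b < N) (hc : c < N) :
    Btw (i - (a : ZMod N)) (i - (b : ZMod N)) (i - (c : ZMod N)) ↔ cyc c b a := by
  unfold Btw cyc
  rw [sub_sub_sub_cancel_left, sub_sub_sub_cancel_left, val_sub_cast b a hb ha,
    val_sub_cast c a hc ha]
  split_ifs <;> omega

theorem cast_surj {N : ℕ} [NeZero N] (u : ZMod N) : ∃ a, a < N ∧ (a : ZMod N) = u :=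
  ⟨u.val, ZMod.val_lt u, ZMod.natCast_zmod_val u⟩

theorem Btw.rot {N : ℕ} [NeZero N] {u v w : Vx N} (h : Btw u v w) : Btw v w u := by
  obtain ⟨a, ha, rfl⟩ := cast_surj u
  obtain ⟨b, hb, rfl⟩ := cast_surj v
  obtain ⟨c, hc, rfl⟩ := cast_surj w
  have h1 := btw_cast 0 a b c ha hb hc
  have h2 := btw_cast 0 b c a hb hc ha
  simp only [zero_add] at h1 h2
  rw [h1] at h
  rw [h2]
  unfold cyc at *
  omega

theorem Btw.ne {N : ℕ} {u v w : Vx N} (h : Btw u v w) : u ≠ v ∧ u ≠ w := by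
  obtain ⟨h1, h2⟩ := h
  constructor <;> rintro rfl <;> simp at h1 h2

theorem tri_exists {N : ℕ} [NeZero N] (T : Triang N) (u v w : Vx N) (hb : Btw u v w)
    (h1 : Joined T u v) (h2 : Joined T v w) (h3 : Joined T w u) :
    ∃ (a : Vx N) (p q : ℕ), IsUTri T (a, p, q) ∧
      ((a = u ∧ a + (p : Vx N) = v ∧ a + ((p + q : ℕ) : Vx N) = w) ∨
       (a = v ∧ a + (p : Vx N) = w ∧ a + ((p + q : ℕ) : Vx N) = u) ∨
       (a = w ∧ a + (p : Vx N) = u ∧ a + ((p + q : ℕ) : Vx N) = v)) := by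
  have n1 : u.val ≠ v.val := fun h => hb.ne.1 (ZMod.val_injective N h)
  have n2 : u.val ≠ w.val := fun h => hb.ne.2 (ZMod.val_injective N h)
  have n3 : v.val ≠ w.val := fun h => hb.rot.ne.1 (ZMod.val_injective N h)
  by_cases c1 : u.val < v.val ∧ u.val < w.val
  · obtain ⟨p, q, h, e⟩ := tri_core T u v w hb h1 h2 h3 c1.1 c1.2
    exact ⟨u, p, q, h, Or.inl ⟨rfl, e⟩⟩
  by_cases c2 : v.val < w.val ∧ v.val < u.val
  · obtain ⟨p, q, h, e⟩ := tri_core T v w u hb.rot h2 h3 h1 c2.1 c2.2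
    exact ⟨v, p, q, h, Or.inr (Or.inl ⟨rfl, e⟩)⟩
  · obtain ⟨p, q, h, e⟩ := tri_core T w u v hb.rot.rot h3 h1 h2 (by omega) (by omega)
    exact ⟨w, p, q, h, Or.inr (Or.inr ⟨rfl, e⟩)⟩

theorem label_rule {N : ℕ} [NeZero N] (T : Triang N) (i : Vx N) (l : Vx N → ℕ)
    (hl : IsCCLabel T i l) (u v w : Vx N) (hb : Btw u v w)
    (h1 : Joined T u v) (h2 : Joined T v w) (h3 : Joined T w u) (hi : InCWArc w i u) :
    l v = l u + l w := by
  obtain ⟨a, p, q, ht, ⟨e1, e2, e3⟩ | ⟨e1, e2, e3⟩ | ⟨e1, e2, e3⟩⟩ := tri_exists T u v w hb h1 h2 h3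
  all_goals
    have hr := hl.2.2 a p q ht
    rw [e2, e3, e1] at hr
  · exact hr.1 hi
  · rw [hr.2.2 hi, add_comm]
  · rw [hr.2.1 hi, add_comm]

theorem utri_inj {N : ℕ} (T : Triang N) (t t' : Vx N × ℕ × ℕ) (h : IsUTri T t)
    (h' : IsUTri T t') (hi : ∀ v, UInc v t ↔ UInc v t') : t = t' := by
  obtain ⟨a, p, q⟩ := t
  obtain ⟨a', p', q'⟩ := t'
  obtain ⟨h1, h2, h3, -, -, -, h4, h5⟩ := h
  obtain ⟨k1, k2, k3, -, -, -, k4, k5⟩ := h'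
  simp only [UInc] at *
  have ha : a = a' := by
    have g1 := (hi a).1 (Or.inl rfl)
    have g2 := (hi a').2 (Or.inl rfl)
    by_contra hne
    have l1 : a'.val < a.val := by
      rcases g1 with g | g | g
      · exact absurd g hne
      · rw [g]; exact k4
      · rw [g]; exact k5
    have l2 : a.val < a'.val := by
      rcases g2 with g | g | g
      · exact absurd g.symm hne
      · rw [g]; exact h4
      · rw [g]; exact h5
    omega
  subst ha
  have key : ∀ m, m < N → ((m = 0 ∨ m = p ∨ m = p + q) ↔ (m = 0 ∨ m = p' ∨ m = p' + q')) := by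
    intro m hm
    have := hi (a + (m : Vx N))
    have c : ∀ r, r < N → (a + (m : Vx N) = a + (r : Vx N) ↔ m = r) := by
      intro r hr
      rw [add_right_inj]
      exact ⟨cast_inj hm hr, fun h => by rw [h]⟩
    rw [c p (by omega), c (p+q) (by omega), c p' (by omega), c (p'+q') (by omega)] at this
    have c0 : a + (m : Vx N) = a ↔ m = 0 := by
      simpa using c 0 (by omega)
    rwa [c0] at this
  have r1 := key p (by omega)
  have r2 := key (p+q) (by omega)
  have r3 := key p' (by omega)
  have r4 := key (p'+q') (by omega)
  have : p = p' ∧ q = q' := by omega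
  rw [this.1, this.2]

structure Chart (N : ℕ) (φ : ℕ → ZMod N) : Prop where
  inj : ∀ a b, a < N → b < N → φ a = φ b → a = b
  surj : ∀ v, ∃ a, a < N ∧ φ a = v
  orient : (∀ a b c, a < N → b < N → c < N → (Btw (φ a) (φ b) (φ c) ↔ cyc a b c)) ∨
    (∀ a b c, a < N → b < N → c < N → (Btw (φ a) (φ b) (φ c) ↔ cyc c b a))
  adj : ∀ x y, x < y → y < N → ((φ y = φ x + 1 ∨ φ x = φ y + 1) ↔ (y = x + 1 ∨ (x = 0 ∧ y + 1 = N)))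

theorem Chart.cross {N : ℕ} {φ : ℕ → ZMod N} (C : Chart N φ) (a b c d : ℕ) (ha : a < N)
    (hb : b < N) (hc : c < N) (hd : d < N) : DCross (φ a, φ b) (φ c, φ d) ↔
    ((cyc a c b ∧ cyc b d a) ∨ (cyc a d b ∧ cyc b c a)) := by
  unfold DCross
  dsimp only
  rcases C.orient with h | h
  · rw [h a c b ha hc hb, h b d a hb hd ha, h a d b ha hd hb, h b c a hb hc ha]
  · rw [h a c b ha hc hb, h b d a hb hd ha, h a d b ha hd hb, h b c a hb hc ha]
    tauto

theorem Chart.lin {N : ℕ} {φ : ℕ → ZMod N} (C : Chart N φ) (hN : 3 ≤ N) (T : Triang N) :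
    Lin (N - 1) (fun x y => Joined T (φ x) (φ y)) where
  step x hx := by
    have := (C.adj x (x+1) (by omega) (by omega)).2 (Or.inl rfl)
    unfold Joined; tauto
  root := by
    have := (C.adj 0 (N-1) (by omega) (by omega)).2 (Or.inr ⟨rfl, by omega⟩)
    unfold Joined; tauto
  nc x z y w h1 h2 h3 h4 hE hE' := by
    have m : ∀ a b, a < b → b < N → b ≠ a + 1 → ¬ (a = 0 ∧ b + 1 = N) →
        Joined T (φ a) (φ b) → MemD T (φ a) (φ b) := by
      intro a b hab hb hn1 hn2 hj
      have := (C.adj a b hab hb)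
      rcases hj with hj | hj | hj
      · have := this.1 (Or.inl hj); omega
      · have := this.1 (Or.inr hj); omega
      · exact hj
    have m1 := m x y (by omega) (by omega) (by omega) (by omega) hE
    have m2 := m z w (by omega) (by omega) (by omega) (by omega) hE'
    have hx : x < N := by omega
    have hy : y < N := by omega
    have hz : z < N := by omega
    have hw : w < N := by omega
    rcases m1 with m1 | m1 <;> rcases m2 with m2 | m2 <;> apply T.noncross _ m1 _ m2 <;>
      rw [C.cross _ _ _ _ (by assumption) (by assumption) (by assumption) (by assumption)] <;>
      unfold cyc <;> omega
  max x y hxy hy hno := by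
    by_cases hadj : φ y = φ x + 1 ∨ φ x = φ y + 1
    · unfold Joined; tauto
    right; right
    apply T.maximal
    · refine ⟨?_, ?_, ?_⟩
      · intro h
        have := C.inj y x (by omega) (by omega) h
        omega
      · tauto
      · tauto
    · rintro ⟨q1, q2⟩ hq
      obtain ⟨u, hu, rfl⟩ := C.surj q1
      obtain ⟨w, hw, rfl⟩ := C.surj q2
      rw [C.cross _ _ _ _ (by omega) (by omega) (by omega) (by omega)]
      rcases lt_trichotomy u w with h | h | h
      · have := hno u w h (by omega) (Or.inr (Or.inr (Or.inl hq)))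
        unfold cyc; omega
      · subst h
        exact absurd rfl (T.valid _ hq).1
      · have := hno w u h (by omega) (Or.inr (Or.inr (Or.inr hq)))
        unfold cyc; omega

theorem sort_tri {n : ℕ} {E : ℕ → ℕ → Prop} (hs : ∀ x y, E x y → E y x) (x c y : ℕ) (hx : x ≤ n)
    (hc : c ≤ n) (hy : y ≤ n) (n1 : x ≠ c) (n2 : c ≠ y) (n3 : x ≠ y) (h1 : E x c) (h2 : E c y)
    (h3 : E x y) : ∃ s, IsLT n E s ∧ ∀ v, linc v s ↔ (v = x ∨ v = c ∨ v = y) := by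
  have h1' := hs _ _ h1
  have h2' := hs _ _ h2
  have h3' := hs _ _ h3
  unfold IsLT linc
  rcases lt_or_gt_of_ne n1 with g1 | g1 <;> rcases lt_or_gt_of_ne n2 with g2 | g2 <;>
    rcases lt_or_gt_of_ne n3 with g3 | g3
  · exact ⟨(x, c, y), ⟨g1, g2, hy, h1, h2, h3⟩, fun v => Iff.rfl⟩
  · omega
  · exact ⟨(x, y, c), ⟨g3, g2, hc, h3, h2', h1⟩, fun v => by dsimp only; tauto⟩
  · exact ⟨(y, x, c), ⟨g3, g1, hc, h3', h1, h2'⟩, fun v => by dsimp only; tauto⟩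
  · exact ⟨(c, x, y), ⟨g1, g3, hy, h1', h3, h2⟩, fun v => by dsimp only; tauto⟩
  · exact ⟨(c, y, x), ⟨g2, g3, hx, h2, h3', h1'⟩, fun v => by dsimp only; tauto⟩
  · omega
  · exact ⟨(y, c, x), ⟨g2, g1, hx, h2', h1', h3'⟩, fun v => by dsimp only; tauto⟩

theorem lt_inj {n : ℕ} {E : ℕ → ℕ → Prop} (s s' : ℕ × ℕ × ℕ) (h : IsLT n E s) (h' : IsLT n E s')
    (hi : ∀ v, v ≤ n → (linc v s ↔ linc v s')) : s = s' := by
  obtain ⟨a, b, c⟩ := s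
  obtain ⟨a', b', c'⟩ := s'
  obtain ⟨h1, h2, h3, -⟩ := h
  obtain ⟨k1, k2, k3, -⟩ := h'
  simp only [linc] at *
  have r1 := hi a (by omega)
  have r2 := hi b (by omega)
  have r3 := hi c (by omega)
  have r4 := hi a' (by omega)
  have r5 := hi b' (by omega)
  have r6 := hi c' (by omega)
  have : a = a' ∧ b = b' ∧ c = c' := by omega
  rw [this.1, this.2.1, this.2.2]

theorem Chart.bridge {N : ℕ} [NeZero N] {φ : ℕ → ZMod N} (C : Chart N φ) (hN : 3 ≤ N)
    (T : Triang N) (l : Vx N → ℕ) (hl : IsCCLabel T (φ 0) l) (k : ℕ) (hk : 0 < k) (hkN : k < N)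
    (I : Finset (Vx N)) (hI : ∀ m, m < N → (φ m ∈ I ↔ k < m)) :
    l (φ k) = UMatch T I := by
  have H := C.lin hN T
  have hlab : ∀ x c y, IsLT (N-1) (fun x y => Joined T (φ x) (φ y)) (x, c, y) →
      l (φ c) = l (φ x) + l (φ y) := by
    rintro x c y ⟨h1, h2, h3, h4, h5, h6⟩
    dsimp only at *
    rcases C.orient with h | h
    · apply label_rule T (φ 0) l hl _ _ _ ?_ h4 h5 h6.symm
      · by_cases hx : x = 0
        · subst hx; right; left; rfl
        · right; right
          rw [h _ _ _ (by omega) (by omega) (by omega)]; unfold cyc; omega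
      · rw [h _ _ _ (by omega) (by omega) (by omega)]; unfold cyc; omega
    · rw [add_comm]
      apply label_rule T (φ 0) l hl _ _ _ ?_ h5.symm h4.symm h6
      · by_cases hx : x = 0
        · subst hx; left; rfl
        · right; right
          rw [h _ _ _ (by omega) (by omega) (by omega)]; unfold cyc; omega
      · rw [h _ _ _ (by omega) (by omega) (by omega)]; unfold cyc; omega
  have fin := H.final (by omega) (fun m => l (φ m)) hlab hl.1 (hl.2.1 _ H.root) k hk (by omega)
  rw [UMatch_eq, ← fin]
  have hex : ∀ s : ℕ × ℕ × ℕ, ∃ t, IsLT (N-1) (fun x y => Joined T (φ x) (φ y)) s →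
      IsUTri T t ∧ ∀ v, UInc v t ↔ (v = φ s.1 ∨ v = φ s.2.1 ∨ v = φ s.2.2) := by
    rintro ⟨x, c, y⟩
    by_cases hs : IsLT (N-1) (fun x y => Joined T (φ x) (φ y)) (x, c, y)
    swap
    · exact ⟨(0, 0, 0), fun h => absurd h hs⟩
    obtain ⟨h1, h2, h3, h4, h5, h6⟩ := hs
    dsimp only at *
    rcases C.orient with h | h
    · obtain ⟨a, p, q, ht, e⟩ := tri_exists T (φ x) (φ c) (φ y)
        (by rw [h _ _ _ (by omega) (by omega) (by omega)]; unfold cyc; omega) h4 h5 h6.symm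
      refine ⟨(a, p, q), fun _ => ⟨ht, fun v => ?_⟩⟩
      simp only [UInc]
      rcases e with ⟨e1, e2, e3⟩ | ⟨e1, e2, e3⟩ | ⟨e1, e2, e3⟩ <;> rw [e2, e3, e1] <;> tauto
    · obtain ⟨a, p, q, ht, e⟩ := tri_exists T (φ y) (φ c) (φ x)
        (by rw [h _ _ _ (by omega) (by omega) (by omega)]; unfold cyc; omega) h5.symm h4.symm h6
      refine ⟨(a, p, q), fun _ => ⟨ht, fun v => ?_⟩⟩
      simp only [UInc]
      rcases e with ⟨e1, e2, e3⟩ | ⟨e1, e2, e3⟩ | ⟨e1, e2, e3⟩ <;> rw [e2, e3, e1] <;> tauto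
  choose g hg using hex
  have hinc : ∀ s, IsLT (N-1) (fun x y => Joined T (φ x) (φ y)) s → ∀ w, w < N →
      (linc w s ↔ UInc (φ w) (g s)) := by
    intro s hs w hw
    rw [(hg s hs).2]
    obtain ⟨h1, h2, h3, -⟩ := hs
    unfold linc
    have c : ∀ r, r < N → (φ w = φ r ↔ w = r) :=
      fun r hr => ⟨C.inj w r hw hr, fun h => by rw [h]⟩
    rw [c _ (by omega), c _ (by omega), c _ (by omega)]
  apply MM_transport UInc linc I _ _ _ φ g
  · refine ⟨?_, ?_, ?_⟩
    · intro m hm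
      simp only [Finset.coe_Ioc, Set.mem_Ioc] at hm
      exact (hI m (by omega)).2 hm.1
    · intro a ha b hb hab
      simp only [Finset.coe_Ioc, Set.mem_Ioc] at ha hb
      exact C.inj a b (by omega) (by omega) hab
    · intro v hv
      obtain ⟨a, ha, rfl⟩ := C.surj v
      refine ⟨a, ?_, rfl⟩
      have := (hI a ha).1 hv
      simp only [Finset.coe_Ioc, Set.mem_Ioc]
      omega
  · refine ⟨?_, ?_, ?_⟩
    · intro s hs
      rw [Finset.mem_coe, mem_LTri] at hs
      exact (hg s hs).1
    · intro s hs s' hs' hss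
      rw [Finset.mem_coe, mem_LTri] at hs hs'
      refine lt_inj s s' hs hs' (fun v hv => ?_)
      rw [hinc s hs v (by omega), hinc s' hs' v (by omega), hss]
    · rintro ⟨a, p, q⟩ ht
      have ht' : IsUTri T (a, p, q) := ht
      obtain ⟨h1, h2, h3, h4, h5, h6, h7, h8⟩ := ht
      dsimp only at *
      obtain ⟨x, hx, ex⟩ := C.surj a
      obtain ⟨c, hc, ec⟩ := C.surj (a + (p : Vx N))
      obtain ⟨y, hy, ey⟩ := C.surj (a + ((p + q : ℕ) : Vx N))
      have j1 : Joined T (φ x) (φ c) := by rw [ex, ec]; exact joined_of_side h4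
      have j2 : Joined T (φ c) (φ y) := by
        have := joined_of_side h5
        rw [ey, ec]
        convert this using 1
        push_cast; ring
      have j3 : Joined T (φ x) (φ y) := by
        have := (joined_of_side h6).symm
        rw [ey, ex]
        convert this using 1
        rw [Nat.sub_sub, Nat.cast_sub (by omega), add_assoc, add_sub_cancel, ZMod.natCast_self,
          add_zero]
      have n1 : x ≠ c := by
        rintro rfl
        rw [← ec, ex] at h7
        exact absurd h7 (lt_irrefl _)
      have n3 : x ≠ y := by
        rintro rfl
        rw [← ey, ex] at h8
        exact absurd h8 (lt_irrefl _)
      have n2 : c ≠ y := by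
        rintro rfl
        rw [ec, add_right_inj] at ey
        have := cast_inj (by omega) (by omega) ey
        omega
      obtain ⟨s, hs, hsi⟩ := sort_tri (n := N - 1) (E := fun x y => Joined T (φ x) (φ y))
        (fun _ _ h => h.symm) x c y (by omega) (by omega) (by omega) n1 n2 n3 j1 j2 j3
      refine ⟨s, ?_, ?_⟩
      · rw [Finset.mem_coe, mem_LTri]; exact hs
      · refine utri_inj T _ _ (hg s hs).1 ht' (fun v => ?_)
        obtain ⟨w, hw, rfl⟩ := C.surj v
        rw [← hinc s hs w hw, hsi]
        simp only [UInc]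
        rw [← ex, ex, ← ec, ← ey, ← ex]
        have c : ∀ r, r < N → (φ w = φ r ↔ w = r) :=
          fun r hr => ⟨C.inj w r hw hr, fun h => by rw [h]⟩
        rw [c _ hx, c _ hc, c _ hy]
  · intro w hw s hs
    rw [Finset.mem_coe, mem_LTri] at hs
    rw [Finset.mem_Ioc] at hw
    exact hinc s hs w (by omega)

theorem cast_succ_iff {N : ℕ} (hN : 3 ≤ N) (x y : ℕ) (hx : x < N) (hy : y < N) :
    (y : ZMod N) = x + 1 ↔ (y = x + 1 ∨ (y = 0 ∧ x + 1 = N)) := by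
  rw [← Nat.cast_succ, ZMod.natCast_eq_natCast_iff', Nat.mod_eq_of_lt hy]
  by_cases h : x + 1 = N
  · rw [Nat.succ_eq_add_one, h, Nat.mod_self]; omega
  · rw [Nat.mod_eq_of_lt (by omega)]; omega

theorem chart_pos {N : ℕ} [NeZero N] (hN : 3 ≤ N) (i : ZMod N) :
    Chart N (fun k => i + (k : ZMod N)) where
  inj a b ha hb h := cast_inj ha hb (add_left_cancel h)
  surj v := by
    obtain ⟨a, ha, e⟩ := cast_surj (v - i)
    exact ⟨a, ha, by rw [e]; ring⟩
  orient := Or.inl (fun a b c ha hb hc => btw_cast i a b c ha hb hc)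
  adj x y hxy hy := by
    have h1 := cast_succ_iff hN x y (by omega) hy
    have h2 := cast_succ_iff hN y x hy (by omega)
    rw [add_assoc, add_assoc, add_right_inj, add_right_inj, h1, h2]
    omega

theorem chart_neg {N : ℕ} [NeZero N] (hN : 3 ≤ N) (i : ZMod N) :
    Chart N (fun k => i - (k : ZMod N)) where
  inj a b ha hb h := cast_inj ha hb (sub_right_injective h)
  surj v := by
    obtain ⟨a, ha, e⟩ := cast_surj (i - v)
    exact ⟨a, ha, by rw [e]; ring⟩
  orient := Or.inr (fun a b c ha hb hc => btw_cast_neg i a b c ha hb hc)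
  adj x y hxy hy := by
    have h1 := cast_succ_iff hN x y (by omega) hy
    have h2 := cast_succ_iff hN y x hy (by omega)
    have e1 : i - (y : ZMod N) = i - x + 1 ↔ (x : ZMod N) = y + 1 := by
      constructor <;> intro h <;> linear_combination h
    have e2 : i - (x : ZMod N) = i - y + 1 ↔ (y : ZMod N) = x + 1 := by
      constructor <;> intro h <;> linear_combination h
    rw [e1, e2, h1, h2]
    omega

theorem half_neg (N : ℕ) (hN : 3 ≤ N) [NeZero N] (T : Triang N)
    (i j : Vx N) (hij : i ≠ j) (l : Vx N → ℕ) (h : IsCCLabel T i l) :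
    l j = UMatch T (Finset.univ.filter (fun v => Btw i v j)) := by
  obtain ⟨k, hk, e⟩ := (chart_neg hN i).surj j
  have hk0 : 0 < k := by
    rcases Nat.eq_zero_or_pos k with rfl | h
    · simp at e; exact absurd e hij
    · exact h
  have := (chart_neg hN i).bridge hN T l (by simpa using h) k hk0 hk
    (Finset.univ.filter (fun v => Btw i v j)) (by
      intro m hm
      have hb := btw_cast_neg i 0 m k (by omega) hm hk
      rw [e] at hb
      simp only [Nat.cast_zero, sub_zero] at hb
      rw [Finset.mem_filter, hb]
      simp only [Finset.mem_univ, true_and]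
      unfold cyc; omega)
  rwa [e] at this

theorem half_pos' (N : ℕ) (hN : 3 ≤ N) [NeZero N] (T : Triang N)
    (i j : Vx N) (hij : i ≠ j) (l : Vx N → ℕ) (h : IsCCLabel T i l) :
    l j = UMatch T (Finset.univ.filter (fun v => Btw j v i)) := by
  obtain ⟨k, hk, e⟩ := (chart_pos hN i).surj j
  have hk0 : 0 < k := by
    rcases Nat.eq_zero_or_pos k with rfl | h
    · simp at e; exact absurd e hij
    · exact h
  have := (chart_pos hN i).bridge hN T l (by simpa using h) k hk0 hk
    (Finset.univ.filter (fun v => Btw j v i)) (by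
      intro m hm
      have hb := btw_cast i k m 0 hk hm (by omega)
      rw [e] at hb
      simp only [Nat.cast_zero, add_zero] at hb
      rw [Finset.mem_filter, hb]
      simp only [Finset.mem_univ, true_and]
      unfold cyc; omega)
  rwa [e] at this

/-- **Broline–Crowe–Isaacs.** The Conway–Coxeter frieze entry
`(i,j)` of a triangulation `T` of the unpunctured disc equals the number of
matchings between `T` and the vertices strictly between `i` and `j` clockwise,
and also the number of matchings between `T` and the vertices strictly between
`j` and `i`; in particular `(i,j) = (j,i)`. -/
theorem broline_crowe_isaacs (N : ℕ) (hN : 3 ≤ N) [NeZero N] (T : Triang N)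
    (i j : Vx N) (hij : i ≠ j) (l l' : Vx N → ℕ)
    (h : IsCCLabel T i l) (h' : IsCCLabel T j l') :
    l j = UMatch T (Finset.univ.filter (fun v => Btw i v j)) ∧
    l j = UMatch T (Finset.univ.filter (fun v => Btw j v i)) ∧
    l j = l' i := by
  have h2 := half_pos' N hN T i j hij l h
  exact ⟨half_neg N hN T i j hij l h, h2, h2.trans (half_neg N hN T j i hij.symm l' h').symm⟩

end Frieze
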